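/- With O2 = x y ∂_x + y² ∂_y + (1/2) y q ∂_q + (i/2) x q² + y and D_s = i q ∂_y − ∂_x ∂_q, one has the operator identity [D_s, O2] = (3/2) y ∘ D_s (composition of multiplication by (3/2)y with D_s); equivalently D_s ∘ O2 = (O2 + (3/2) y) ∘ D_s. In particular O2 preserves the kernel of D_s. -/

import Mathlib

open MvPolynomial Complex

noncomputable section

/-- The space of complex polynomials in three variables `x = X 0`, `y = X 1`, `q = X 2`. -/
abbrev V : Type := MvPolynomial (Fin 3) ℂ

/-- Partial derivative `∂_x`. -/
def Dx : Module.End ℂ V := (pderiv (0 : Fin 3)).toLinearMap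
/-- Partial derivative `∂_y`. -/
def Dy : Module.End ℂ V := (pderiv (1 : Fin 3)).toLinearMap
/-- Partial derivative `∂_q`. -/
def Dq : Module.End ℂ V := (pderiv (2 : Fin 3)).toLinearMap
/-- Multiplication by `x`. -/
def Mx : Module.End ℂ V := LinearMap.mulLeft ℂ (X 0)
/-- Multiplication by `y`. -/
def My : Module.End ℂ V := LinearMap.mulLeft ℂ (X 1)
/-- Multiplication by `q`. -/
def Mq : Module.End ℂ V := LinearMap.mulLeft ℂ (X 2)

/-- `X = -y ∂_x - (i/2) q²`. -/
def opX : Module.End ℂ V := -(My * Dx) - (I / 2) • (Mq * Mq)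
/-- `H = -x ∂_x + y ∂_y + q ∂_q + 1/2`. -/
def opH : Module.End ℂ V := -(Mx * Dx) + My * Dy + Mq * Dq + (1 / 2 : ℂ) • 1
/-- `Y = -x ∂_y - (i/2) ∂_q²`. -/
def opY : Module.End ℂ V := -(Mx * Dy) - (I / 2) • (Dq * Dq)
/-- `E = x ∂_x + y ∂_y + 1/2`. -/
def opE : Module.End ℂ V := Mx * Dx + My * Dy + (1 / 2 : ℂ) • 1
/-- The symplectic Dirac operator `D_s = i q ∂_y - ∂_x ∂_q`. -/
def Ds : Module.End ℂ V := I • (Mq * Dy) - Dx * Dq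
/-- `X_s = y ∂_q + i x q`. -/
def Xs : Module.End ℂ V := My * Dq + I • (Mx * Mq)
/-- `O1 = x² ∂_x + x y ∂_y - (1/2) x q ∂_q + (i/2) y ∂_q² + (1/2) x`. -/
def opO1 : Module.End ℂ V :=
  Mx * Mx * Dx + Mx * My * Dy - (1 / 2 : ℂ) • (Mx * Mq * Dq) + (I / 2) • (My * Dq * Dq)
    + (1 / 2 : ℂ) • Mx
/-- `O2 = x y ∂_x + y² ∂_y + (1/2) y q ∂_q + (i/2) x q² + y`. -/
def opO2 : Module.End ℂ V :=
  Mx * My * Dx + My * My * Dy + (1 / 2 : ℂ) • (My * Mq * Dq) + (I / 2) • (Mx * Mq * Mq) + My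

theorem pderiv_comm_aux (i j : Fin 3) (p : V) :
    pderiv i (pderiv j p) = pderiv j (pderiv i p) := by
  have h : ⁅(pderiv i : Derivation ℂ V V), (pderiv j : Derivation ℂ V V)⁆ = 0 := by
    apply MvPolynomial.derivation_ext
    intro k
    simp only [Derivation.commutator_apply, pderiv_X, Derivation.zero_apply]
    simp only [Pi.single_apply]
    split_ifs <;> simp
  have h2 := congrArg (fun D : Derivation ℂ V V => D p) h
  simp only [Derivation.commutator_apply, Derivation.zero_apply] at h2
  exact sub_eq_zero.mp h2

theorem comm_aux : Ds * opO2 - opO2 * Ds = (3 / 2 : ℂ) • (My * Ds) := by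
  refine LinearMap.ext fun p => ?_
  have e : (C (I / 2) : V) = C I * C (1 / 2) := by rw [← C_mul]; congr 1; ring
  have e2 : (C (3 / 2) : V) = 3 * C (1 / 2) := by
    rw [← map_ofNat C 3, ← C_mul]; congr 1; ring
  have e3 : (2 : V) * C (1 / 2) = 1 := by
    rw [← map_ofNat C 2, ← C_mul, ← C_1]; congr 1; norm_num
  have h10 : (pderiv (1 : Fin 3)) (X 0 : V) = 0 := pderiv_X_of_ne (by decide)
  have h20 : (pderiv (2 : Fin 3)) (X 0 : V) = 0 := pderiv_X_of_ne (by decide)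
  have h01 : (pderiv (0 : Fin 3)) (X 1 : V) = 0 := pderiv_X_of_ne (by decide)
  have h21 : (pderiv (2 : Fin 3)) (X 1 : V) = 0 := pderiv_X_of_ne (by decide)
  have h02 : (pderiv (0 : Fin 3)) (X 2 : V) = 0 := pderiv_X_of_ne (by decide)
  have h12 : (pderiv (1 : Fin 3)) (X 2 : V) = 0 := pderiv_X_of_ne (by decide)
  simp only [Ds, opO2, Dx, Dy, Dq, Mx, My, Mq, LinearMap.sub_apply, LinearMap.add_apply,
    LinearMap.smul_apply, Module.End.mul_apply, LinearMap.mulLeft_apply,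
    Derivation.coeFn_coe, smul_eq_C_mul, map_add, map_sub, Derivation.leibniz, smul_eq_mul,
    pderiv_C, pderiv_X_self, h10, h20, h01, h21, h02, h12, map_zero,
    pderiv_comm_aux 1 0, pderiv_comm_aux 2 0, pderiv_comm_aux 2 1, e, e2, map_one,
    mul_zero, zero_mul, add_zero, zero_add, mul_one]
  generalize hc : (C (1 / 2) : V) = c at *
  grind

/-- `[D_s, O2] = (3/2) y ∘ D_s`, equivalently `D_s ∘ O2 = (O2 + (3/2) y) ∘ D_s`;
in particular `O2` preserves the kernel of `D_s`. -/
theorem symmetry_O2 :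
    Ds * opO2 - opO2 * Ds = (3 / 2 : ℂ) • (My * Ds) ∧
    Ds * opO2 = (opO2 + (3 / 2 : ℂ) • My) * Ds ∧
    ∀ p : V, Ds p = 0 → Ds (opO2 p) = 0 := by
  have h2 : Ds * opO2 = (opO2 + (3 / 2 : ℂ) • My) * Ds := by
    rw [add_mul, smul_mul_assoc, ← comm_aux]; abel
  refine ⟨comm_aux, h2, fun p hp => ?_⟩
  have h3 := congrArg (fun D : Module.End ℂ V => D p) h2
  simpa only [Module.End.mul_apply, hp, map_zero] using h3
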